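/- arXiv:1202.2277 — 3 statements merged into one kernel-verified Lean document; each statement's English description precedes it below -/
import Mathlib

section
/- Let F be a probability measure supported in (-∞,1] with finite moment generating function near 0, assume E(F) ≤ μ < 1 and that F is not the point mass at μ, and let ν* be the unique maximizer of ν ↦ L(ν;F,μ) over [0,1/(1−μ)]. If ∫ (1−μ)/(1−x) dF(x) ≤ 1, then ν* = 1/(1−μ) and ∫ 1/(1−(x−μ)ν*) dF(x) ≤ 1. Otherwise, ∫ (x−μ)/(1−(x−μ)ν*) dF(x) = 0 (i.e., the derivative of L(·;F,μ) vanishes at ν*) and ∫ 1/(1−(x−μ)ν*) dF(x) = 1. -/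
open MeasureTheory ProbabilityTheory Set Filter
open scoped ENNReal NNReal Classical BoundedContinuousFunction

noncomputable section

/-- Kullback–Leibler divergence `D(F‖G)` between measures on ℝ
(`+∞` unless `F ≪ G` and `log (dF/dG)` is `F`-integrable). -/
def KL (F G : Measure ℝ) : ℝ≥0∞ :=
  if F ≪ G ∧ Integrable (fun x => Real.log (F.rnDeriv G x).toReal) F
  then ENNReal.ofReal (∫ x, Real.log (F.rnDeriv G x).toReal ∂F) else ⊤

/-- `D_inf(F,μ;𝒜)`: infimum of `D(F‖G)` over probability measures `G` supported in
`(-∞,1]` with (finite) mean `E(G) > μ`.  (For `G` supported in `(-∞,1]` the mean is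
well defined in `[-∞,1]`, and `E(G) > μ` holds iff `G` has integrable identity with
`∫ x dG > μ`.) -/
def DinfSemi (F : Measure ℝ) (μ : ℝ) : ℝ≥0∞ :=
  ⨅ G ∈ {G : Measure ℝ | IsProbabilityMeasure G ∧ G (Set.Ioi 1) = 0 ∧
      Integrable (fun x : ℝ => x) G ∧ μ < ∫ x, x ∂G}, KL F G

/-- `D_inf(F,μ;𝒜_a)`: infimum of `D(F‖G)` over probability measures `G` supported in
`[a,1]` with mean `E(G) > μ`. -/
def DinfBdd (a : ℝ) (F : Measure ℝ) (μ : ℝ) : ℝ≥0∞ :=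
  ⨅ G ∈ {G : Measure ℝ | IsProbabilityMeasure G ∧ G (Set.Icc a 1) = 1 ∧
      μ < ∫ x, x ∂G}, KL F G

/-- `L(ν;F,μ) = ∫ log(1-(x-μ)ν) dF(x)`, as an extended real number in `[-∞,∞)`:
the value is `⊥ = -∞` when the integrand equals `-∞` on a non-`F`-null set or when
its (necessarily negative, for `F` supported in `(-∞,1]` with finite mean) part fails
to be integrable. -/
def LL (F : Measure ℝ) (μ ν : ℝ) : EReal :=
  if Integrable (fun x => Real.log (1 - (x - μ) * ν)) F ∧ F {x | 1 - (x - μ) * ν ≤ 0} = 0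
  then ((∫ x, Real.log (1 - (x - μ) * ν) ∂F : ℝ) : EReal)
  else ⊥

/-- `D̃_inf(F,μ) = sup_{0 ≤ ν ≤ 1/(1-μ)} L(ν;F,μ)`. -/
def Dtilde (F : Measure ℝ) (μ : ℝ) : EReal :=
  ⨆ ν ∈ Set.Icc (0 : ℝ) (1 - μ)⁻¹, LL F μ ν

/-- The moment generating function of `F` is finite in a neighborhood of the origin. -/
def MGFNearZero (F : Measure ℝ) : Prop :=
  ∃ ε > (0 : ℝ), ∀ l : ℝ, |l| < ε → Integrable (fun x => Real.exp (l * x)) F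

/-- Fenchel–Legendre transform `Λ*(x) = sup_λ {λx - log ∫ e^{λu} dF(u)}` of the
logarithmic moment generating function of `F`. -/
def Legendre (F : Measure ℝ) (x : ℝ) : EReal :=
  ⨆ l : ℝ, ((l * x : ℝ) : EReal) -
    ENNReal.log (∫⁻ y, ENNReal.ofReal (Real.exp (l * y)) ∂F)

/-- Empirical distribution `F̂_t = (1/t) ∑_{i<t} δ_{X_i}`. -/
def empMeas {Ω : Type*} [MeasurableSpace Ω] (X : ℕ → Ω → ℝ) (t : ℕ) (ω : Ω) : Measure ℝ :=
  (t : ℝ≥0∞)⁻¹ • ∑ i ∈ Finset.range t, Measure.dirac (X i ω)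

/-- Empirical mean `μ̂_t = (1/t) ∑_{i<t} X_i`. -/
def empMean {Ω : Type*} (X : ℕ → Ω → ℝ) (t : ℕ) (ω : Ω) : ℝ :=
  (∑ i ∈ Finset.range t, X i ω) / t

end

lemma aux_int_log (F : Measure ℝ) [IsProbabilityMeasure F] (u l : ℝ → ℝ) (hm : Measurable u)
    (hu : Integrable u F) (hl : Integrable l F) (hpos : ∀ᵐ x ∂F, 0 < u x)
    (hle : ∀ᵐ x ∂F, l x ≤ Real.log (u x)) : Integrable (fun x => Real.log (u x)) F := by
  refine Integrable.mono' (hu.abs.add hl.abs) (Real.measurable_log.comp hm).aestronglyMeasurable ?_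
  filter_upwards [hpos, hle] with x h1 h2
  have h3 := Real.log_le_sub_one_of_pos h1
  rw [Real.norm_eq_abs, Pi.add_apply, abs_le]
  constructor
  · have := neg_abs_le (l x); have := abs_nonneg (u x); linarith
  · have := le_abs_self (u x); have := abs_nonneg (l x); linarith

lemma aux_fatou (F : Measure ℝ) [IsProbabilityMeasure F] (a c : ℝ → ℝ) (ham : Measurable a)
    (hcm : Measurable c) (hai : Integrable a F) (hci : Integrable c F)
    (hapos : ∀ᵐ x ∂F, 0 < a x) (hcpos : ∀ᵐ x ∂F, 0 ≤ c x)
    (hlog : Integrable (fun x => Real.log (a x)) F)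
    (hmax : ∀ t : ℝ, 0 < t → t ≤ 1 / 2 →
      Integrable (fun x => Real.log ((1 - t) * a x + t * c x)) F →
      ∫ x, Real.log ((1 - t) * a x + t * c x) ∂F ≤ ∫ x, Real.log (a x) ∂F) :
    ∫⁻ x, ENNReal.ofReal (c x / a x) ∂F ≤ 1 := by
  set t : ℕ → ℝ := fun n => 1 / ((n : ℝ) + 2) with ht
  have htpos : ∀ n, 0 < t n := fun n => by simp only [ht]; positivity
  have htle : ∀ n, t n ≤ 1 / 2 := fun n => by
    simp only [ht]
    apply one_div_le_one_div_of_le (by norm_num)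
    have : (0 : ℝ) ≤ n := Nat.cast_nonneg n
    linarith
  have htlim : Tendsto t atTop (nhds 0) := by
    have h : Tendsto (fun n : ℕ => (n : ℝ) + 2) atTop atTop :=
      tendsto_atTop_add_const_right _ _ tendsto_natCast_atTop_atTop
    have h2 := h.inv_tendsto_atTop
    refine h2.congr fun n => ?_
    simp [ht]
  set f : ℕ → ℝ → ℝ := fun n x =>
    (Real.log ((1 - t n) * a x + t n * c x) - Real.log (a x)) / t n + 2 with hf
  have hlb : ∀ n, ∀ᵐ x ∂F, Real.log (a x) - 2 * t n ≤ Real.log ((1 - t n) * a x + t n * c x) := by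
    intro n
    filter_upwards [hapos, hcpos] with x h1 h2
    have h3 : 0 < 1 - t n := by linarith [htle n]
    have h4 : Real.log ((1 - t n) * a x) ≤ Real.log ((1 - t n) * a x + t n * c x) :=
      Real.log_le_log (by positivity) (by nlinarith [mul_nonneg (htpos n).le h2])
    rw [Real.log_mul h3.ne' h1.ne'] at h4
    have h5 := Real.one_sub_inv_le_log_of_pos h3
    have h6 : (1 - t n)⁻¹ ≤ 1 + 2 * t n := by
      rw [inv_le_iff_one_le_mul₀ h3]
      nlinarith [htpos n, htle n]
    linarith
  have hint : ∀ n, Integrable (fun x => Real.log ((1 - t n) * a x + t n * c x)) F := by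
    intro n
    refine aux_int_log F _ (fun x => Real.log (a x) - 2 * t n) (by fun_prop)
      ((hai.const_mul _).add (hci.const_mul _)) (hlog.sub (integrable_const _)) ?_ (hlb n)
    filter_upwards [hapos, hcpos] with x h1 h2
    have h3 : 0 < 1 - t n := by linarith [htle n]
    have := htpos n
    positivity
  have hfint : ∀ n, Integrable (f n) F := fun n =>
    (((hint n).sub hlog).div_const _).add (integrable_const _)
  have hfnn : ∀ n, 0 ≤ᵐ[F] f n := by
    intro n
    filter_upwards [hlb n] with x hx
    simp only [hf, Pi.zero_apply]
    have : -2 ≤ (Real.log ((1 - t n) * a x + t n * c x) - Real.log (a x)) / t n := by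
      rw [le_div_iff₀ (htpos n)]; linarith
    linarith
  have hfle : ∀ n, ∫⁻ x, ENNReal.ofReal (f n x) ∂F ≤ 2 := by
    intro n
    rw [← ofReal_integral_eq_lintegral_ofReal (hfint n) (hfnn n)]
    have h1 : ∫ x, f n x ∂F = ((∫ x, Real.log ((1 - t n) * a x + t n * c x) ∂F)
        - ∫ x, Real.log (a x) ∂F) / t n + 2 := by
      simp only [hf]
      have hi : Integrable (fun x => (Real.log ((1 - t n) * a x + t n * c x) - Real.log (a x))
          / t n) F := ((hint n).sub hlog).div_const _
      rw [integral_add hi (integrable_const _), integral_div,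
        integral_sub (hint n) hlog]
      simp
    rw [h1]
    have h2 : ((∫ x, Real.log ((1 - t n) * a x + t n * c x) ∂F)
        - ∫ x, Real.log (a x) ∂F) / t n ≤ 0 :=
      div_nonpos_of_nonpos_of_nonneg (by linarith [hmax (t n) (htpos n) (htle n) (hint n)])
        (htpos n).le
    calc ENNReal.ofReal _ ≤ ENNReal.ofReal 2 := ENNReal.ofReal_le_ofReal (by linarith)
      _ = 2 := by simp
  have hlim : ∀ᵐ x ∂F, Tendsto (fun n => f n x) atTop (nhds (c x / a x + 1)) := by
    filter_upwards [hapos, hcpos] with x h1 h2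
    have hd : HasDerivAt (fun s : ℝ => Real.log ((1 - s) * a x + s * c x)) (c x / a x - 1) 0 := by
      have h3 : HasDerivAt (fun s : ℝ => (1 - s) * a x + s * c x) (c x - a x) 0 := by
        have := (((hasDerivAt_id (0:ℝ)).const_sub 1).mul_const (a x)).add
          ((hasDerivAt_id (0:ℝ)).mul_const (c x))
        exact this.congr_deriv (by ring)
      have h4 := h3.log (by simp [h1.ne'])
      convert h4 using 1
      simp; field_simp
    have h5 := hd.tendsto_slope_zero
    have h6 : Tendsto t atTop (nhdsWithin 0 {0}ᶜ) :=
      tendsto_nhdsWithin_iff.2 ⟨htlim, Eventually.of_forall fun n => (htpos n).ne'⟩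
    have h7 := (h5.comp h6).add_const 2
    convert h7 using 1
    · funext n
      simp [hf, div_eq_inv_mul]
    · congr 1; ring
  have hfat : ∫⁻ x, ENNReal.ofReal (c x / a x + 1) ∂F ≤ 2 := by
    calc ∫⁻ x, ENNReal.ofReal (c x / a x + 1) ∂F
        = ∫⁻ x, liminf (fun n => ENNReal.ofReal (f n x)) atTop ∂F := by
          apply lintegral_congr_ae
          filter_upwards [hlim] with x hx
          exact ((ENNReal.tendsto_ofReal hx).liminf_eq).symm
      _ ≤ liminf (fun n => ∫⁻ x, ENNReal.ofReal (f n x) ∂F) atTop :=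
          lintegral_liminf_le (fun n => by simp only [hf]; fun_prop)
      _ ≤ liminf (fun _ : ℕ => (2 : ℝ≥0∞)) atTop :=
          liminf_le_liminf (Eventually.of_forall hfle)
      _ = 2 := by simp
  have h8 : ∫⁻ x, ENNReal.ofReal (c x / a x + 1) ∂F
      = ∫⁻ x, ENNReal.ofReal (c x / a x) ∂F + 1 := by
    have : ∫⁻ x, ENNReal.ofReal (c x / a x + 1) ∂F
        = ∫⁻ x, (ENNReal.ofReal (c x / a x) + 1) ∂F := by
      apply lintegral_congr_ae
      filter_upwards [hapos, hcpos] with x h1 h2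
      rw [ENNReal.ofReal_add (by positivity) (by norm_num), ENNReal.ofReal_one]
    rw [this, lintegral_add_right _ measurable_const]
    simp
  rw [h8, show (2 : ℝ≥0∞) = 1 + 1 by norm_num] at hfat
  exact (ENNReal.add_le_add_iff_right ENNReal.one_ne_top).1 hfat

lemma aux_id (F : Measure ℝ) [IsProbabilityMeasure F] (h : MGFNearZero F) :
    Integrable (fun x : ℝ => x) F := by
  obtain ⟨ε, hε, h⟩ := h
  have h1 := h (ε / 2) (by rw [abs_of_pos (by positivity)]; linarith)
  have h2 := h (-(ε / 2)) (by rw [abs_neg, abs_of_pos (by positivity)]; linarith)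
  refine Integrable.mono' ((h1.add h2).const_mul (2 / ε)) (by fun_prop) ?_
  filter_upwards with x
  have e1 := Real.add_one_le_exp (ε / 2 * x)
  have e2 := Real.add_one_le_exp (-(ε / 2) * x)
  have p1 := Real.exp_pos (ε / 2 * x)
  have p2 := Real.exp_pos (-(ε / 2) * x)
  rw [Real.norm_eq_abs, Pi.add_apply, div_mul_eq_mul_div, le_div_iff₀ hε]
  rcases abs_cases x with ⟨h, _⟩ | ⟨h, _⟩ <;> rw [h] <;> nlinarith

/-- (Lemma `lem_integrable`.) Characterization of the unique
maximizer `ν*` of `ν ↦ L(ν;F,μ)` on `[0,1/(1-μ)]`: if `∫ (1-μ)/(1-x) dF ≤ 1` then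
`ν* = 1/(1-μ)` and `∫ 1/(1-(x-μ)ν*) dF ≤ 1`; otherwise `L'(ν*;F,μ) = 0`
(i.e. `∫ (x-μ)/(1-(x-μ)ν*) dF = 0`) and `∫ 1/(1-(x-μ)ν*) dF = 1`. -/
theorem stmt6 (F : Measure ℝ) [IsProbabilityMeasure F] (hsupp : F (Set.Ioi 1) = 0)
    (hmgf : MGFNearZero F) (μ : ℝ) (hEF : ∫ x, x ∂F ≤ μ) (hμ : μ < 1)
    (hne : F ≠ Measure.dirac μ)
    (ν' : ℝ) (hmem : ν' ∈ Set.Icc (0 : ℝ) (1 - μ)⁻¹)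
    (hmax : ∀ ν ∈ Set.Icc (0 : ℝ) (1 - μ)⁻¹, LL F μ ν ≤ LL F μ ν')
    (huniq : ∀ ν'' ∈ Set.Icc (0 : ℝ) (1 - μ)⁻¹,
      (∀ ν ∈ Set.Icc (0 : ℝ) (1 - μ)⁻¹, LL F μ ν ≤ LL F μ ν'') → ν'' = ν') :
    ((∫⁻ x, ENNReal.ofReal (1 - μ) / ENNReal.ofReal (1 - x) ∂F ≤ 1) →
      ν' = (1 - μ)⁻¹ ∧ ∫⁻ x, (ENNReal.ofReal (1 - (x - μ) * ν'))⁻¹ ∂F ≤ 1) ∧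
    ((1 < ∫⁻ x, ENNReal.ofReal (1 - μ) / ENNReal.ofReal (1 - x) ∂F) →
      (∫ x, (x - μ) / (1 - (x - μ) * ν') ∂F = 0) ∧
      ∫⁻ x, (ENNReal.ofReal (1 - (x - μ) * ν'))⁻¹ ∂F = 1) := by
  have hid := aux_id F hmgf
  have hb : 0 < 1 - μ := by linarith
  have hx1 : ∀ᵐ x ∂F, x ≤ 1 := by
    rw [ae_iff]
    convert hsupp using 2
    ext x; simp
  have hgi : ∀ ν : ℝ, Integrable (fun x => 1 - (x - μ) * ν) F := fun ν =>
    (integrable_const _).sub ((hid.sub (integrable_const _)).mul_const _)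
  have hgm : ∀ ν : ℝ, Measurable (fun x : ℝ => 1 - (x - μ) * ν) := fun ν => by fun_prop
  have hgnn : ∀ ν ∈ Set.Icc (0 : ℝ) (1 - μ)⁻¹, ∀ᵐ x ∂F, 0 ≤ 1 - (x - μ) * ν := by
    intro ν hν
    filter_upwards [hx1] with x hx
    have h1 : (1 - μ) * ν ≤ 1 := by
      have := mul_le_mul_of_nonneg_left hν.2 hb.le
      rwa [mul_inv_cancel₀ hb.ne'] at this
    nlinarith [mul_le_mul_of_nonneg_right (show x - μ ≤ 1 - μ by linarith) hν.1]
  have h0mem : (0 : ℝ) ∈ Set.Icc (0 : ℝ) (1 - μ)⁻¹ := ⟨le_rfl, (inv_pos.2 hb).le⟩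
  have hbmem : (1 - μ)⁻¹ ∈ Set.Icc (0 : ℝ) (1 - μ)⁻¹ := ⟨(inv_pos.2 hb).le, le_rfl⟩
  have hLL0 : LL F μ 0 = 0 := by
    have h10 : ¬ ((1 : ℝ) ≤ 0) := by norm_num
    simp [LL, h10]
  have hcond : Integrable (fun x => Real.log (1 - (x - μ) * ν')) F ∧
      F {x | 1 - (x - μ) * ν' ≤ 0} = 0 := by
    by_contra hc
    have := hmax 0 h0mem
    rw [hLL0, LL, if_neg hc] at this
    simp at this
  obtain ⟨hlog, hnull⟩ := hcond
  have hapos : ∀ᵐ x ∂F, 0 < 1 - (x - μ) * ν' := by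
    rw [ae_iff]; simpa using hnull
  have hopt : ∀ ν ∈ Set.Icc (0 : ℝ) (1 - μ)⁻¹,
      ∫⁻ x, ENNReal.ofReal ((1 - (x - μ) * ν) / (1 - (x - μ) * ν')) ∂F ≤ 1 := by
    intro ν hν
    refine aux_fatou F (fun x => 1 - (x - μ) * ν') (fun x => 1 - (x - μ) * ν) (hgm _) (hgm _)
      (hgi _) (hgi _) hapos (hgnn ν hν) hlog ?_
    intro t ht0 ht1 hti
    have hmem2 : (1 - t) * ν' + t * ν ∈ Set.Icc (0 : ℝ) (1 - μ)⁻¹ :=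
      (convex_Icc (0 : ℝ) (1 - μ)⁻¹) hmem hν (by linarith) ht0.le (by ring)
    have hfe : ∀ x : ℝ, (1 - t) * (1 - (x - μ) * ν') + t * (1 - (x - μ) * ν)
        = 1 - (x - μ) * ((1 - t) * ν' + t * ν) := fun x => by ring
    simp only [hfe] at hti ⊢
    have hn2 : F {x | 1 - (x - μ) * ((1 - t) * ν' + t * ν) ≤ 0} = 0 := by
      have : ∀ᵐ x ∂F, 0 < 1 - (x - μ) * ((1 - t) * ν' + t * ν) := by
        filter_upwards [hapos, hgnn ν hν] with x h1 h2
        rw [← hfe]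
        have h3 : 0 < 1 - t := by linarith
        positivity
      rw [ae_iff] at this; simpa using this
    have := hmax _ hmem2
    rw [LL, LL, if_pos ⟨hti, hn2⟩, if_pos ⟨hlog, hnull⟩] at this
    exact_mod_cast this
  have hinv : ∫⁻ x, (ENNReal.ofReal (1 - (x - μ) * ν'))⁻¹ ∂F
      = ∫⁻ x, ENNReal.ofReal (1 / (1 - (x - μ) * ν')) ∂F := by
    apply lintegral_congr_ae
    filter_upwards [hapos] with x hx
    rw [one_div, ENNReal.ofReal_inv_of_pos hx]
  have hinvle : ∫⁻ x, (ENNReal.ofReal (1 - (x - μ) * ν'))⁻¹ ∂F ≤ 1 := by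
    rw [hinv]; simpa using hopt 0 h0mem
  have hB : ∀ x : ℝ, 1 - (x - μ) * (1 - μ)⁻¹ = (1 - x) / (1 - μ) := fun x => by
    field_simp; ring
  have hdiv : ∫⁻ x, ENNReal.ofReal (1 - μ) / ENNReal.ofReal (1 - x) ∂F
      = ∫⁻ x, (ENNReal.ofReal (1 - (x - μ) * (1 - μ)⁻¹))⁻¹ ∂F := by
    apply lintegral_congr
    intro x
    rw [hB, ENNReal.ofReal_div_of_pos hb, ENNReal.inv_div (Or.inl ENNReal.ofReal_ne_top)
      (Or.inl (by simpa using hb))]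
  rw [hdiv]
  refine ⟨fun hle => ⟨?_, hinvle⟩, fun hgt => ?_⟩
  · symm
    apply huniq _ hbmem
    intro ν hν
    by_cases hc : Integrable (fun x => Real.log (1 - (x - μ) * ν)) F ∧
        F {x | 1 - (x - μ) * ν ≤ 0} = 0
    swap
    · rw [LL, if_neg hc]; exact bot_le
    have hbpos : ∀ᵐ x ∂F, 0 < 1 - (x - μ) * (1 - μ)⁻¹ := by
      have h1 := ae_lt_top (μ := F) (f := fun x => (ENNReal.ofReal (1 - (x - μ) * (1 - μ)⁻¹))⁻¹)
        (by fun_prop) (ne_top_of_le_ne_top ENNReal.one_ne_top hle)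
      filter_upwards [h1] with x hx
      rw [ENNReal.inv_lt_top] at hx
      exact ENNReal.ofReal_pos.1 hx
    have hle' : ∫⁻ x, ENNReal.ofReal ((1 - (x - μ) * (1 - μ)⁻¹)⁻¹) ∂F ≤ 1 := by
      refine le_trans (le_of_eq ?_) hle
      apply lintegral_congr_ae
      filter_upwards [hbpos] with x hx
      rw [ENNReal.ofReal_inv_of_pos hx]
    have hnn : 0 ≤ᵐ[F] fun x => (1 - (x - μ) * (1 - μ)⁻¹)⁻¹ := by
      filter_upwards [hbpos] with x hx
      exact (inv_pos.2 hx).le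
    have hii : Integrable (fun x => (1 - (x - μ) * (1 - μ)⁻¹)⁻¹) F := by
      refine ⟨(hgm _).inv.aestronglyMeasurable, ?_⟩
      rw [hasFiniteIntegral_iff_ofReal hnn]
      exact hle'.trans_lt ENNReal.one_lt_top
    have hiile : ∫ x, (1 - (x - μ) * (1 - μ)⁻¹)⁻¹ ∂F ≤ 1 := by
      rw [integral_eq_lintegral_of_nonneg_ae hnn hii.1]
      exact ENNReal.toReal_le_of_le_ofReal zero_le_one (by simpa using hle')
    have hlb : Integrable (fun x => Real.log (1 - (x - μ) * (1 - μ)⁻¹)) F := by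
      refine aux_int_log F _ (fun x => 1 - (1 - (x - μ) * (1 - μ)⁻¹)⁻¹) (hgm _) (hgi _)
        ((integrable_const _).sub hii) hbpos ?_
      filter_upwards [hbpos] with x hx
      exact Real.one_sub_inv_le_log_of_pos hx
    have hbn : F {x | 1 - (x - μ) * (1 - μ)⁻¹ ≤ 0} = 0 := by
      rw [ae_iff] at hbpos; simpa using hbpos
    rw [LL, LL, if_pos hc, if_pos ⟨hlb, hbn⟩, EReal.coe_le_coe_iff]
    have hcpos : ∀ᵐ x ∂F, 0 < 1 - (x - μ) * ν := by
      rw [ae_iff]; simpa using hc.2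
    set s := ν * (1 - μ) with hs
    have hs1 : s ≤ 1 := by
      have := mul_le_mul_of_nonneg_right hν.2 hb.le
      rwa [inv_mul_cancel₀ hb.ne'] at this
    have key : ∫ x, (Real.log (1 - (x - μ) * ν) - Real.log (1 - (x - μ) * (1 - μ)⁻¹)) ∂F
        ≤ ∫ x, (1 - s) * ((1 - (x - μ) * (1 - μ)⁻¹)⁻¹ - 1) ∂F := by
      refine integral_mono_ae (hc.1.sub hlb) ((hii.sub (integrable_const _)).const_mul _) ?_
      filter_upwards [hbpos, hcpos] with x h1 h2
      have h3 := Real.log_le_sub_one_of_pos (div_pos h2 h1)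
      rw [Real.log_div h2.ne' h1.ne'] at h3
      refine h3.trans (le_of_eq ?_)
      have h4 : 1 - (x - μ) * ν = (1 - s) + s * (1 - (x - μ) * (1 - μ)⁻¹) := by
        rw [hs]; field_simp; ring
      rw [h4]
      set y := 1 - (x - μ) * (1 - μ)⁻¹
      have : y ≠ 0 := h1.ne'
      field_simp
      ring
    rw [integral_sub hc.1 hlb, integral_const_mul, integral_sub hii (integrable_const _)] at key
    simp only [integral_const, probReal_univ, one_smul] at key
    nlinarith [mul_nonneg (sub_nonneg.2 hs1) (sub_nonneg.2 hiile)]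
  · have hν0 := hmem.1
    have hνb : ν' ≠ (1 - μ)⁻¹ := by
      rintro rfl
      exact absurd hinvle (not_le.2 hgt)
    have hνlt : ν' < (1 - μ)⁻¹ := lt_of_le_of_ne hmem.2 hνb
    have hreal : ∀ ν ∈ Set.Icc (0 : ℝ) (1 - μ)⁻¹,
        Integrable (fun x => (1 - (x - μ) * ν) / (1 - (x - μ) * ν')) F ∧
        ∫ x, (1 - (x - μ) * ν) / (1 - (x - μ) * ν') ∂F ≤ 1 ∧
        ENNReal.ofReal (∫ x, (1 - (x - μ) * ν) / (1 - (x - μ) * ν') ∂F)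
          = ∫⁻ x, ENNReal.ofReal ((1 - (x - μ) * ν) / (1 - (x - μ) * ν')) ∂F := by
      intro ν hν
      have hnn : 0 ≤ᵐ[F] fun x => (1 - (x - μ) * ν) / (1 - (x - μ) * ν') := by
        filter_upwards [hapos, hgnn ν hν] with x h1 h2
        exact div_nonneg h2 h1.le
      have hi : Integrable (fun x => (1 - (x - μ) * ν) / (1 - (x - μ) * ν')) F := by
        refine ⟨((hgm _).div (hgm _)).aestronglyMeasurable, ?_⟩
        rw [hasFiniteIntegral_iff_ofReal hnn]
        exact (hopt ν hν).trans_lt ENNReal.one_lt_top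
      refine ⟨hi, ?_, ofReal_integral_eq_lintegral_ofReal hi hnn⟩
      rw [integral_eq_lintegral_of_nonneg_ae hnn hi.1]
      exact ENNReal.toReal_le_of_le_ofReal zero_le_one (by simpa using hopt ν hν)
    obtain ⟨i0, l0, e0⟩ := hreal 0 h0mem
    obtain ⟨ib, lb, eb⟩ := hreal _ hbmem
    -- the integral in question in terms of the two others
    have hmain : ∫ x, (x - μ) / (1 - (x - μ) * ν') ∂F
        = (1 - μ) * ((∫ x, (1 - (x - μ) * 0) / (1 - (x - μ) * ν') ∂F)
          - ∫ x, (1 - (x - μ) * (1 - μ)⁻¹) / (1 - (x - μ) * ν') ∂F) := by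
      rw [← integral_sub i0 ib, ← integral_const_mul]
      congr 1
      funext x
      rw [← sub_div, mul_div_assoc']
      congr 1
      field_simp
      ring
    rw [hmain, hinv]
    have e0' : ∫⁻ x, ENNReal.ofReal (1 / (1 - (x - μ) * ν')) ∂F
        = ENNReal.ofReal (∫ x, (1 - (x - μ) * 0) / (1 - (x - μ) * ν') ∂F) := by
      rw [e0]; simp
    rw [e0']
    suffices hboth : ∫ x, (1 - (x - μ) * 0) / (1 - (x - μ) * ν') ∂F = 1 ∧
        ∫ x, (1 - (x - μ) * (1 - μ)⁻¹) / (1 - (x - μ) * ν') ∂F = 1 by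
      rw [hboth.1, hboth.2]; simp
    set s := ν' * (1 - μ) with hs
    have hs1 : s < 1 := by
      have := mul_lt_mul_of_pos_right hνlt hb
      rwa [inv_mul_cancel₀ hb.ne'] at this
    have hsum : (1 - s) * (∫ x, (1 - (x - μ) * 0) / (1 - (x - μ) * ν') ∂F)
        + s * (∫ x, (1 - (x - μ) * (1 - μ)⁻¹) / (1 - (x - μ) * ν') ∂F) = 1 := by
      rw [← integral_const_mul, ← integral_const_mul,
        ← integral_add (i0.const_mul _) (ib.const_mul _)]
      have : ∫ x, ((1 - s) * ((1 - (x - μ) * 0) / (1 - (x - μ) * ν'))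
          + s * ((1 - (x - μ) * (1 - μ)⁻¹) / (1 - (x - μ) * ν'))) ∂F = ∫ _, (1 : ℝ) ∂F := by
        apply integral_congr_ae
        filter_upwards [hapos] with x hx
        rw [mul_div_assoc', mul_div_assoc', ← add_div, div_eq_one_iff_eq hx.ne', hs]
        field_simp
        ring
      rw [this]; simp
    rcases hν0.eq_or_lt with h0 | h0
    · have hm : ∫ x, (x - μ) / (1 - (x - μ) * ν') ∂F ≤ 0 := by
        rw [← h0]
        simp only [mul_zero, sub_zero, div_one]
        rw [integral_sub hid (integrable_const _)]
        simpa using hEF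
      rw [hmain] at hm
      have hs0 : s = 0 := by rw [hs, ← h0]; simp
      rw [hs0] at hsum
      have h1 : ∫ x, (1 - (x - μ) * 0) / (1 - (x - μ) * ν') ∂F = 1 := by linarith
      refine ⟨h1, le_antisymm lb ?_⟩
      rw [h1] at hm
      by_contra hlt
      push Not at hlt
      nlinarith [mul_pos hb (sub_pos.2 hlt)]
    · have hs0 : 0 < s := mul_pos h0 hb
      constructor
      · apply le_antisymm l0
        by_contra hlt
        push Not at hlt
        nlinarith [mul_pos (sub_pos.2 hs1) (sub_pos.2 hlt), mul_nonneg hs0.le (sub_nonneg.2 lb)]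
      · apply le_antisymm lb
        by_contra hlt
        push Not at hlt
        nlinarith [mul_nonneg (sub_pos.2 hs1).le (sub_nonneg.2 l0), mul_pos hs0 (sub_pos.2 hlt)]
end

section
/- Let a < 1 be a real number and let μ < 1. Then the map F ↦ D_inf(F,μ;𝒜_a) is continuous on the set of probability measures supported in [a,1], with respect to the topology of weak convergence of probability measures (equivalently, the topology induced by the Lévy metric). -/
open MeasureTheory ProbabilityTheory Set Filter
open scoped ENNReal NNReal Classical BoundedContinuousFunction

lemma ae_Icc {a : ℝ} (F : Measure ℝ) [IsProbabilityMeasure F] (hF : F (Icc a 1) = 1) :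
    ∀ᵐ x ∂F, x ∈ Icc a 1 := by
  rw [← prob_compl_eq_zero_iff measurableSet_Icc] at hF
  exact hF

lemma integrable_of_cont {a : ℝ} (F : Measure ℝ) [IsProbabilityMeasure F] (hF : F (Icc a 1) = 1)
    {f : ℝ → ℝ} (hf : ContinuousOn f (Icc a 1)) : Integrable f F := by
  have h := hf.integrableOn_Icc (μ := F)
  rwa [IntegrableOn, Measure.restrict_eq_self_of_ae_mem (ae_Icc F hF)] at h

lemma joint_cont (a : ℝ) (ha : a < 1) (T : ℝ) (f : ℝ → ℝ → ℝ)
    (hf : ContinuousOn (Function.uncurry f) (Icc 0 T ×ˢ Icc a 1)) :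
    Continuous (fun p : {G : ProbabilityMeasure ℝ // (G : Measure ℝ) (Set.Icc a 1) = 1} × Icc (0 : ℝ) T =>
      ∫ x, f p.2 x ∂(p.1.1 : Measure ℝ)) := by
  let c : C(Icc (0 : ℝ) T × Icc a 1, ℝ) := ⟨fun q => f q.1 q.2, by
    have : Continuous (fun q : Icc (0 : ℝ) T × Icc a 1 => ((q.1 : ℝ), (q.2 : ℝ))) := by fun_prop
    exact hf.comp_continuous this (fun q => ⟨q.1.2, q.2.2⟩)⟩
  let g : Icc (0 : ℝ) T → (ℝ →ᵇ ℝ) := fun ν =>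
    (BoundedContinuousFunction.mkOfCompact (c.curry ν)).compContinuous
      ⟨projIcc a 1 ha.le, continuous_projIcc⟩
  have hg : Continuous g := by
    have h1 : Continuous (fun ν => BoundedContinuousFunction.mkOfCompact (c.curry ν)) :=
      (ContinuousMap.isometryEquivBoundedOfCompact (Icc a 1) ℝ).isometry.continuous.comp
        c.curry.continuous
    exact (BoundedContinuousFunction.continuous_compContinuous _).comp h1
  have heq : ∀ p : {G : ProbabilityMeasure ℝ // (G : Measure ℝ) (Set.Icc a 1) = 1} × Icc (0 : ℝ) T,
      ∫ x, f p.2 x ∂(p.1.1 : Measure ℝ) = ∫ x, g p.2 x ∂(p.1.1 : Measure ℝ) := by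
    intro p
    apply integral_congr_ae
    filter_upwards [ae_Icc _ p.1.2] with x hx
    simp [g, projIcc_of_mem _ hx]
    rfl
  simp_rw [heq]
  rw [continuous_iff_continuousAt]
  intro p0
  have hA : Tendsto (fun p : {G : ProbabilityMeasure ℝ // (G : Measure ℝ) (Set.Icc a 1) = 1} × Icc (0 : ℝ) T =>
      ∫ x, g p0.2 x ∂(p.1.1 : Measure ℝ)) (nhds p0) (nhds (∫ x, g p0.2 x ∂(p0.1.1 : Measure ℝ))) := by
    have : Tendsto (fun p : {G : ProbabilityMeasure ℝ // (G : Measure ℝ) (Set.Icc a 1) = 1} × Icc (0 : ℝ) T => p.1.1) (nhds p0) (nhds p0.1.1) :=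
      (continuous_subtype_val.comp continuous_fst).tendsto p0
    exact (ProbabilityMeasure.tendsto_iff_forall_integral_tendsto.1 this) (g p0.2)
  have hB : Tendsto (fun p : {G : ProbabilityMeasure ℝ // (G : Measure ℝ) (Set.Icc a 1) = 1} × Icc (0 : ℝ) T =>
      ∫ x, (g p.2 - g p0.2) x ∂(p.1.1 : Measure ℝ)) (nhds p0) (nhds 0) := by
    have hn : Tendsto (fun p : {G : ProbabilityMeasure ℝ // (G : Measure ℝ) (Set.Icc a 1) = 1} × Icc (0 : ℝ) T =>
      ‖g p.2 - g p0.2‖) (nhds p0) (nhds 0) := by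
      have : Continuous (fun p : {G : ProbabilityMeasure ℝ // (G : Measure ℝ) (Set.Icc a 1) = 1} × Icc (0 : ℝ) T =>
        ‖g p.2 - g p0.2‖) := by fun_prop
      simpa using this.tendsto p0
    refine squeeze_zero_norm (fun p => ?_) hn
    exact BoundedContinuousFunction.norm_integral_le_norm _ _
  have := hA.add hB
  rw [add_zero] at this
  refine this.congr (fun p => ?_)
  rw [← integral_add (BoundedContinuousFunction.integrable _ _) (BoundedContinuousFunction.integrable _ _)]
  simp

lemma weak_dual {a : ℝ} (F G : Measure ℝ) [IsProbabilityMeasure F] [IsProbabilityMeasure G]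
    (hF : F (Icc a 1) = 1) (hG : G (Icc a 1) = 1) (h : ℝ → ℝ) (hc : ContinuousOn h (Icc a 1))
    (hpos : ∀ x ∈ Icc a 1, 0 < h x) (hint : ∫ x, h x ∂G ≤ 1) :
    ENNReal.ofReal (∫ x, Real.log (h x) ∂F) ≤ KL F G := by
  unfold KL
  split_ifs with hh
  swap
  · exact le_top
  obtain ⟨hac, hi⟩ := hh
  apply ENNReal.ofReal_le_ofReal
  have hlog : Integrable (fun x => Real.log (h x)) F :=
    integrable_of_cont F hF (hc.log (fun x hx => (hpos x hx).ne'))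
  have hhG : Integrable h G := integrable_of_cont G hG hc
  set r : ℝ → ℝ := fun x => (F.rnDeriv G x).toReal with hr
  have hrm : Measurable r := (Measure.measurable_rnDeriv F G).ennreal_toReal
  have hle : ∀ᵐ x ∂G, ‖r x • (h x / r x)‖ ≤ ‖h x‖ := by
    filter_upwards with x
    by_cases h0 : r x = 0
    · simp [h0]
    · rw [smul_eq_mul, mul_div_cancel₀ _ h0]
  have hle' : ∀ᵐ x ∂G, r x • (h x / r x) ≤ h x := by
    filter_upwards [ae_Icc G hG] with x hx
    by_cases h0 : r x = 0
    · simp [h0, (hpos x hx).le]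
    · rw [smul_eq_mul, mul_div_cancel₀ _ h0]
  have hI : Integrable (fun x => r x • (h x / r x)) G :=
    hhG.mono (hrm.aestronglyMeasurable.smul
      ((hhG.aemeasurable.div hrm.aemeasurable).aestronglyMeasurable)) hle
  have hIF : Integrable (fun x => h x / r x) F :=
    (integrable_rnDeriv_smul_iff hac).1 hI
  have e1 : ∫ x, h x / r x ∂F ≤ 1 := by
    rw [← integral_rnDeriv_smul hac]
    exact (integral_mono_ae hI hhG hle').trans hint
  have hrpos : ∀ᵐ x ∂F, 0 < r x := by
    filter_upwards [Measure.rnDeriv_pos hac, hac (Measure.rnDeriv_lt_top F G)] with x h1 h2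
    exact ENNReal.toReal_pos h1.ne' h2.ne
  have e2 : ∫ x, (Real.log (h x) - Real.log (r x)) ∂F ≤ ∫ x, (h x / r x - 1) ∂F := by
    apply integral_mono_ae (hlog.sub hi) (hIF.sub (integrable_const _))
    filter_upwards [ae_Icc F hF, hrpos] with x hx h1
    have h2 := hpos x hx
    show Real.log (h x) - Real.log (r x) ≤ h x / r x - 1
    rw [← Real.log_div h2.ne' h1.ne']
    exact Real.log_le_sub_one_of_pos (by positivity)
  rw [integral_sub hlog hi, integral_sub hIF (integrable_const _)] at e2
  simp at e2
  linarith

/-- Upper bound on KL when `G` dominates `F.withDensity (1/w)`. -/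
lemma KL_le (F G : Measure ℝ) [IsProbabilityMeasure F] [IsProbabilityMeasure G]
    (w : ℝ → ℝ) (hw : Measurable w) (hpos : ∀ᵐ x ∂F, 0 < w x)
    (hlog : Integrable (fun x => Real.log (w x)) F)
    (hG : F.withDensity (fun x => (ENNReal.ofReal (w x))⁻¹) ≤ G) :
    KL F G ≤ ENNReal.ofReal (∫ x, Real.log (w x) ∂F) := by
  have hm : Measurable (fun x => (ENNReal.ofReal (w x))) := hw.ennreal_ofReal
  have hFeq : F = (F.withDensity (fun x => (ENNReal.ofReal (w x))⁻¹)).withDensity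
      (fun x => ENNReal.ofReal (w x)) := by
    have := withDensity_inv_same (μ := F) (f := fun x => (ENNReal.ofReal (w x))⁻¹) hm.inv
      (by filter_upwards with x; simp) (by filter_upwards [hpos] with x hx; simpa using hx)
    simpa using this.symm
  have hFle : F ≤ G.withDensity (fun x => ENNReal.ofReal (w x)) := by
    conv_lhs => rw [hFeq]
    refine Measure.le_iff.2 (fun s hs => ?_)
    rw [withDensity_apply _ hs, withDensity_apply _ hs]
    exact lintegral_mono' (Measure.restrict_mono le_rfl hG) le_rfl
  have hac : F ≪ G := (Measure.absolutelyContinuous_of_le hFle).trans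
    (withDensity_absolutelyContinuous _ _)
  have hr : ∀ᵐ x ∂G, F.rnDeriv G x ≤ ENNReal.ofReal (w x) := by
    apply ae_le_of_forall_setLIntegral_le_of_sigmaFinite (Measure.measurable_rnDeriv F G)
    intro s hs _
    rw [Measure.setLIntegral_rnDeriv hac, ← withDensity_apply _ hs]
    exact hFle s
  set r : ℝ → ℝ := fun x => (F.rnDeriv G x).toReal with hrdef
  have hrm : Measurable r := (Measure.measurable_rnDeriv F G).ennreal_toReal
  have hrpos : ∀ᵐ x ∂F, 0 < r x := by
    filter_upwards [Measure.rnDeriv_pos hac, hac (Measure.rnDeriv_lt_top F G)] with x h1 h2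
    exact ENNReal.toReal_pos h1.ne' h2.ne
  have hrle : ∀ᵐ x ∂F, Real.log (r x) ≤ Real.log (w x) := by
    filter_upwards [hrpos, hac hr, hpos] with x h1 h2 h3
    exact Real.log_le_log h1 (ENNReal.toReal_le_of_le_ofReal h3.le h2)
  have hinv : Integrable (fun x => 1 / r x) F := by
    rw [← integrable_rnDeriv_smul_iff hac]
    refine (integrable_const (1 : ℝ)).mono (hrm.smul (measurable_const.div hrm)).aestronglyMeasurable ?_
    filter_upwards with x
    show ‖r x • (1 / r x)‖ ≤ _
    by_cases h0 : r x = 0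
    · simp [h0]
    · rw [smul_eq_mul, mul_div_cancel₀ _ h0]
  have hi : Integrable (fun x => Real.log (r x)) F := by
    refine integrable_of_le_of_le hrm.log.aestronglyMeasurable (g₁ := fun x => 1 - 1 / r x)
      ?_ hrle ((integrable_const 1).sub hinv) hlog
    filter_upwards [hrpos] with x h1
    have := Real.one_sub_inv_le_log_of_pos h1
    simpa using this
  unfold KL
  rw [if_pos ⟨hac, hi⟩]
  exact ENNReal.ofReal_le_ofReal (integral_mono_ae hi hlog hrle)

lemma h_pos {μ ν t x : ℝ} (hν : 0 ≤ ν) (hνt : ν * (1 - μ) ≤ t) (ht1 : t < 1) (hx : x ≤ 1) :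
    0 < 1 - (x - μ) * ν := by
  nlinarith [mul_nonneg hν (sub_nonneg.2 hx)]

lemma upper {a μ : ℝ} (ha : a < 1) (hμ : μ < 1) (F : Measure ℝ) [IsProbabilityMeasure F]
    (hF : F (Icc a 1) = 1) (t ν : ℝ) (ht0 : 0 < t) (ht1 : t < 1) (hν : 0 ≤ ν)
    (hνt : ν * (1 - μ) ≤ t)
    (hA1 : ∫ x, (x - μ) / (1 - (x - μ) * ν) ∂F < 0 → ν * (1 - μ) = t)
    (hA2 : 0 < ∫ x, (x - μ) / (1 - (x - μ) * ν) ∂F → ν = 0) :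
    DinfBdd a F μ ≤ ENNReal.ofReal ((∫ x, Real.log (1 - (x - μ) * ν) ∂F) + (- 2 * Real.log t)) := by
  set h : ℝ → ℝ := fun x => 1 - (x - μ) * ν with hh
  have hp : ∀ x ∈ Icc a 1, 0 < h x := fun x hx => h_pos hν hνt ht1 hx.2
  have hc : Continuous h := by fun_prop
  have hpF : ∀ᵐ x ∂F, 0 < h x := (ae_Icc F hF).mono hp
  have I1 : Integrable (fun x => (x - μ) / h x) F := integrable_of_cont F hF
    (ContinuousOn.div (by fun_prop) hc.continuousOn (fun x hx => (hp x hx).ne'))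
  have I2 : Integrable (fun x => (h x)⁻¹) F := integrable_of_cont F hF
    (hc.continuousOn.inv₀ (fun x hx => (hp x hx).ne'))
  have I3 : Integrable (fun x => Real.log (h x)) F := integrable_of_cont F hF
    (hc.continuousOn.log (fun x hx => (hp x hx).ne'))
  set A := ∫ x, (x - μ) / h x ∂F with hA
  set m := ∫ x, (h x)⁻¹ ∂F with hm
  have hmA : m = 1 + ν * A := by
    rw [hm, hA, ← integral_const_mul]
    have : (1 : ℝ) = ∫ x, (1 : ℝ) ∂F := by simp
    rw [this, ← integral_add (integrable_const _) (I1.const_mul _)]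
    apply integral_congr_ae
    filter_upwards [hpF] with x hx
    field_simp
    simp only [hh]; ring
  have hm0 : 0 ≤ m := integral_nonneg_of_ae (hpF.mono (fun x hx => (inv_pos.2 hx).le))
  have hm1 : m ≤ 1 := by
    rw [hmA]
    rcases lt_trichotomy A 0 with h0 | h0 | h0
    · nlinarith
    · simp [h0]
    · simp [hA2 h0]
  have htm : t ^ 2 * m ≤ 1 := by nlinarith
  -- the measure
  set w : ℝ → ℝ := fun x => h x / t ^ 2 with hwdef
  have hwm : Measurable w := (hc.measurable).div_const _
  have hwpos : ∀ᵐ x ∂F, 0 < w x := hpF.mono (fun x hx => by positivity)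
  set G0 := F.withDensity (fun x => (ENNReal.ofReal (w x))⁻¹) with hG0
  set G := G0 + ENNReal.ofReal (1 - t ^ 2 * m) • Measure.dirac (1 : ℝ) with hG
  have hkm : Measurable (fun x => (ENNReal.ofReal (w x))⁻¹) := hwm.ennreal_ofReal.inv
  have hG0u : G0 univ = ENNReal.ofReal (t ^ 2 * m) := by
    rw [hG0, withDensity_apply _ MeasurableSet.univ, Measure.restrict_univ, hm,
      ← integral_const_mul, ofReal_integral_eq_lintegral_ofReal (I2.const_mul _)]
    · apply lintegral_congr_ae
      filter_upwards [hpF] with x hx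
      rw [← ENNReal.ofReal_inv_of_pos (by positivity)]
      congr 1
      simp only [hwdef]; field_simp
    · filter_upwards [hpF] with x hx
      show 0 ≤ _
      positivity
  have hGp : IsProbabilityMeasure G := ⟨by
    rw [hG]
    simp only [Measure.coe_add, Pi.add_apply, Measure.coe_smul, Pi.smul_apply, smul_eq_mul, hG0u]
    rw [measure_univ, mul_one, ← ENNReal.ofReal_add (by positivity) (by linarith)]
    simp⟩
  have hG0fin : IsFiniteMeasure G0 := ⟨by rw [hG0u]; exact ENNReal.ofReal_lt_top⟩
  have hGs : G (Icc a 1) = 1 := by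
    rw [← prob_compl_eq_zero_iff measurableSet_Icc, hG]
    have h1 : F (Icc a 1)ᶜ = 0 := (prob_compl_eq_zero_iff measurableSet_Icc).2 hF
    have h2 : G0 (Icc a 1)ᶜ = 0 := withDensity_absolutelyContinuous _ _ h1
    simp [h2, ha.le]
  have IG : Integrable (fun x : ℝ => x) G := integrable_of_cont G hGs continuousOn_id
  have hmean : ∫ x, x ∂G = t ^ 2 * (A + μ * m) + (1 - t ^ 2 * m) := by
    have hle0 : G0 ≤ G := Measure.le_add_right le_rfl
    have hle1 : ENNReal.ofReal (1 - t ^ 2 * m) • Measure.dirac (1 : ℝ) ≤ G :=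
      Measure.le_add_left le_rfl
    rw [hG, integral_add_measure (IG.mono_measure hle0) (IG.mono_measure hle1), integral_smul_measure,
      integral_dirac, ENNReal.toReal_ofReal (by linarith), hG0,
      integral_withDensity_eq_integral_toReal_smul hkm (hwpos.mono (fun x hx => by simpa using hx))]
    congr 1
    · rw [hA, hm, ← integral_const_mul, ← integral_add I1 (I2.const_mul _), ← integral_const_mul]
      apply integral_congr_ae
      filter_upwards [hpF] with x hx
      have : 0 < w x := by positivity
      rw [ENNReal.toReal_inv, ENNReal.toReal_ofReal this.le]
      simp only [hwdef, smul_eq_mul]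
      field_simp
      ring
    · simp
  have hgt : μ < ∫ x, x ∂G := by
    rw [hmean]
    have key : 0 < t ^ 2 * A * (1 - ν * (1 - μ)) + (1 - μ) * (1 - t ^ 2) := by
      have h1 : 0 < (1 - μ) * (1 - t ^ 2) := mul_pos (by linarith) (by nlinarith)
      rcases lt_or_ge A 0 with h0 | h0
      · rw [hA1 h0]
        have e : ν * (1 - μ) = t := hA1 h0
        have h2 : 0 ≤ (1 - μ) + t * A := by
          have : 0 ≤ (1 - μ) * m := mul_nonneg (by linarith) hm0
          rw [hmA] at this
          rw [← e]; linarith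
        have h3 : 0 ≤ t * (1 - t) * ((1 - μ) + t * A) := mul_nonneg (mul_nonneg ht0.le (by linarith)) h2
        have h4 : 0 < (1 - μ) * (1 - t) := mul_pos (by linarith) (by linarith)
        nlinarith
      · have h2 : 0 ≤ t ^ 2 * A * (1 - ν * (1 - μ)) :=
          mul_nonneg (by positivity) (by linarith)
        linarith
    rw [hmA]
    nlinarith
  have hKL := KL_le F G w hwm hwpos (by
    have : Integrable (fun x => Real.log (h x) - Real.log (t ^ 2)) F := I3.sub (integrable_const _)
    refine this.congr ?_
    filter_upwards [hpF] with x hx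
    simp only [hwdef]
    rw [Real.log_div hx.ne' (by positivity)]) (Measure.le_add_right le_rfl)
  have hfin : ∫ x, Real.log (w x) ∂F = (∫ x, Real.log (h x) ∂F) + (- 2 * Real.log t) := by
    have : ∫ x, Real.log (w x) ∂F = ∫ x, (Real.log (h x) - Real.log (t ^ 2)) ∂F := by
      apply integral_congr_ae
      filter_upwards [hpF] with x hx
      simp only [hwdef]
      rw [Real.log_div hx.ne' (by positivity)]
    rw [this, integral_sub I3 (integrable_const _)]
    simp [Real.log_pow]
    ring
  rw [hfin] at hKL
  refine le_trans ?_ hKL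
  exact iInf₂_le G ⟨hGp, hGs, hgt⟩

theorem stmt9 (a : ℝ) (ha : a < 1) (μ : ℝ) (hμ : μ < 1) :
    Continuous (fun F : {G : ProbabilityMeasure ℝ // (G : Measure ℝ) (Set.Icc a 1) = 1} =>
      DinfBdd a (F.1 : Measure ℝ) μ) := by
  have hμ' : 0 < 1 - μ := by linarith
  have main : ∀ t : ℝ, 0 < t → t < 1 →
      ∃ Φ : {G : ProbabilityMeasure ℝ // (G : Measure ℝ) (Set.Icc a 1) = 1} → ℝ,
      Continuous Φ ∧ ∀ F, 0 ≤ Φ F ∧ ENNReal.ofReal (Φ F) ≤ DinfBdd a (F.1 : Measure ℝ) μ ∧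
        DinfBdd a (F.1 : Measure ℝ) μ ≤ ENNReal.ofReal (Φ F + (- 2 * Real.log t)) := by
    intro t ht0 ht1
    set T := t / (1 - μ) with hT
    have hT0 : 0 < T := by positivity
    have hTμ : T * (1 - μ) = t := by rw [hT]; field_simp
    have hνT : ∀ ν ∈ Icc 0 T, ν * (1 - μ) ≤ t := fun ν hν => by
      rw [← hTμ]; exact mul_le_mul_of_nonneg_right hν.2 hμ'.le
    have hpos : ∀ q ∈ (Icc 0 T ×ˢ Icc a 1 : Set (ℝ × ℝ)), 0 < 1 - (q.2 - μ) * q.1 :=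
      fun q hq => h_pos hq.1.1 (hνT _ hq.1) ht1 hq.2.2
    have cL := joint_cont a ha T (fun ν x => Real.log (1 - (x - μ) * ν))
      (ContinuousOn.log (by fun_prop) (fun q hq => (hpos q hq).ne'))
    have cA := joint_cont a ha T (fun ν x => (x - μ) / (1 - (x - μ) * ν))
      (ContinuousOn.div (by fun_prop) (by fun_prop) (fun q hq => (hpos q hq).ne'))
    have : Nonempty (Icc (0 : ℝ) T) := ⟨⟨0, le_rfl, hT0.le⟩⟩
    set L : {G : ProbabilityMeasure ℝ // (G : Measure ℝ) (Set.Icc a 1) = 1} → Icc (0 : ℝ) T → ℝ :=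
      fun F ν => ∫ x, Real.log (1 - (x - μ) * ν) ∂(F.1 : Measure ℝ) with hL
    have hΦ := IsCompact.continuous_sSup (f := L) (K := univ) isCompact_univ cL
    refine ⟨_, hΦ, fun F => ?_⟩
    have cLF : Continuous (L F) := cL.comp (by fun_prop : Continuous (fun ν : Icc (0 : ℝ) T => (F, ν)))
    have cAF : Continuous (fun ν : Icc (0 : ℝ) T =>
        ∫ x, (x - μ) / (1 - (x - μ) * ν) ∂(F.1 : Measure ℝ)) :=
      cA.comp (by fun_prop : Continuous (fun ν : Icc (0 : ℝ) T => (F, ν)))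
    obtain ⟨ν, -, hs, hmax⟩ := isCompact_univ.exists_sSup_image_eq_and_ge
      (univ_nonempty (α := Icc (0 : ℝ) T)) cLF.continuousOn
    rw [hs]
    have hν0 := ν.2.1
    have hνt := hνT ν ν.2
    have hFP : (F.1 : Measure ℝ) (Icc a 1) = 1 := F.2
    refine ⟨?_, ?_, ?_⟩
    · have := hmax ⟨0, le_rfl, hT0.le⟩ (mem_univ _)
      simpa [hL] using this
    · refine le_iInf₂ (fun G hG => ?_)
      obtain ⟨hGp, hGs, hGm⟩ := hG
      refine weak_dual (F.1 : Measure ℝ) G hFP hGs (fun x => 1 - (x - μ) * ν) (by fun_prop)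
        (fun x hx => h_pos hν0 hνt ht1 hx.2) ?_
      have IG : Integrable (fun x : ℝ => x) G := integrable_of_cont G hGs continuousOn_id
      have : ∫ x, (1 - (x - μ) * (ν : ℝ)) ∂G = 1 - ((∫ x, x ∂G) - μ) * ν := by
        have IG2 : Integrable (fun x : ℝ => (x - μ) * (ν : ℝ)) G :=
          (IG.sub (integrable_const _)).mul_const _
        rw [integral_sub (integrable_const _) IG2,
          integral_mul_const, integral_sub IG (integrable_const _)]
        simp
      rw [this]
      nlinarith
    · -- first-order condition
      have foc : ∀ ν' : Icc (0 : ℝ) T, ((ν : ℝ) - ν') *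
          ∫ x, (x - μ) / (1 - (x - μ) * ν') ∂(F.1 : Measure ℝ) ≤ 0 := by
        intro ν'
        have h1 := hmax ν' (mem_univ _)
        have p1 : ∀ x ∈ Icc a 1, 0 < 1 - (x - μ) * (ν : ℝ) := fun x hx => h_pos hν0 hνt ht1 hx.2
        have p2 : ∀ x ∈ Icc a 1, 0 < 1 - (x - μ) * (ν' : ℝ) :=
          fun x hx => h_pos ν'.2.1 (hνT _ ν'.2) ht1 hx.2
        have i1 : Integrable (fun x => Real.log (1 - (x - μ) * (ν : ℝ))) (F.1 : Measure ℝ) :=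
          integrable_of_cont _ hFP (ContinuousOn.log (by fun_prop) (fun x hx => (p1 x hx).ne'))
        have i2 : Integrable (fun x => Real.log (1 - (x - μ) * (ν' : ℝ))) (F.1 : Measure ℝ) :=
          integrable_of_cont _ hFP (ContinuousOn.log (by fun_prop) (fun x hx => (p2 x hx).ne'))
        have i3 : Integrable (fun x => (x - μ) / (1 - (x - μ) * (ν' : ℝ))) (F.1 : Measure ℝ) :=
          integrable_of_cont _ hFP
            (ContinuousOn.div (by fun_prop) (by fun_prop) (fun x hx => (p2 x hx).ne'))
        have h2 : ∫ x, ((ν : ℝ) - ν') * ((x - μ) / (1 - (x - μ) * ν')) ∂(F.1 : Measure ℝ) ≤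
            ∫ x, (Real.log (1 - (x - μ) * (ν' : ℝ)) - Real.log (1 - (x - μ) * (ν : ℝ))) ∂(F.1 : Measure ℝ) := by
          apply integral_mono_ae (i3.const_mul _) (i2.sub i1)
          filter_upwards [ae_Icc _ hFP] with x hx
          have q1 := p1 x hx
          have q2 := p2 x hx
          show ((ν : ℝ) - ν') * ((x - μ) / (1 - (x - μ) * ν')) ≤
            Real.log (1 - (x - μ) * (ν' : ℝ)) - Real.log (1 - (x - μ) * (ν : ℝ))
          rw [← Real.log_div q2.ne' q1.ne']
          refine le_trans (le_of_eq ?_) (Real.one_sub_inv_le_log_of_pos (div_pos q2 q1))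
          rw [inv_div, eq_sub_iff_add_eq, ← mul_div_assoc, ← add_div, div_eq_one_iff_eq q2.ne']
          ring
        rw [integral_const_mul, integral_sub i2 i1] at h2
        have h3 : L F ν' ≤ L F ν := h1
        simp only [hL] at h3
        linarith
      refine upper ha hμ (F.1 : Measure ℝ) hFP t ν ht0 ht1 hν0 hνt ?_ ?_
      · intro hA
        by_contra hne
        have hlt : (ν : ℝ) < T := by
          refine lt_of_le_of_ne ν.2.2 (fun h => hne (by rw [h, hTμ]))
        have hev := cAF.continuousAt.eventually_lt (continuousAt_const (y := (0 : ℝ))) hA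
        rw [Metric.eventually_nhds_iff] at hev
        obtain ⟨ε, hε, hev⟩ := hev
        have hmin : 0 < min (ε / 2) (T - ν) := lt_min (by linarith) (by linarith)
        set ν' : Icc (0 : ℝ) T := ⟨ν + min (ε / 2) (T - ν), by linarith,
          by linarith [min_le_right (ε / 2) (T - ν)]⟩ with hν'
        have h1 := hev (y := ν') (by
          rw [Subtype.dist_eq, Real.dist_eq]
          simp only [hν', add_sub_cancel_left, abs_of_pos hmin]
          linarith [min_le_left (ε / 2) (T - ν)])
        have h2 := foc ν'
        have h3 : (ν : ℝ) - ν' < 0 := by simp only [hν']; linarith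
        have := mul_pos_of_neg_of_neg h3 h1
        linarith
      · intro hA
        by_contra hne
        have hlt : 0 < (ν : ℝ) := lt_of_le_of_ne hν0 (Ne.symm hne)
        have hev := (continuousAt_const (y := (0 : ℝ))).eventually_lt cAF.continuousAt hA
        rw [Metric.eventually_nhds_iff] at hev
        obtain ⟨ε, hε, hev⟩ := hev
        have hmin : 0 < min (ε / 2) ν := lt_min (by linarith) (by linarith)
        set ν' : Icc (0 : ℝ) T := ⟨ν - min (ε / 2) ν, by linarith [min_le_right (ε / 2) (ν : ℝ)],
          by linarith [ν.2.2]⟩ with hν'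
        have h1 := hev (y := ν') (by
          rw [Subtype.dist_eq, Real.dist_eq]
          simp only [hν', sub_sub_cancel_left, abs_neg, abs_of_pos hmin]
          linarith [min_le_left (ε / 2) (ν : ℝ)])
        have h2 := foc ν'
        have h3 : 0 < (ν : ℝ) - ν' := by simp only [hν']; linarith
        have := mul_pos h3 h1
        linarith
  have hfin : ∀ F : {G : ProbabilityMeasure ℝ // (G : Measure ℝ) (Set.Icc a 1) = 1},
      DinfBdd a (F.1 : Measure ℝ) μ ≠ ⊤ := fun F => by
    obtain ⟨Φ, -, h⟩ := main (1 / 2) (by norm_num) (by norm_num)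
    exact ne_top_of_le_ne_top ENNReal.ofReal_ne_top (h F).2.2
  have hd : Continuous (fun F : {G : ProbabilityMeasure ℝ // (G : Measure ℝ) (Set.Icc a 1) = 1} =>
      (DinfBdd a (F.1 : Measure ℝ) μ).toReal) := by
    apply continuous_of_uniform_approx_of_continuous
    intro u hu
    obtain ⟨ε, hε, hεu⟩ := Metric.mem_uniformity_dist.1 hu
    obtain ⟨Φ, hc, h⟩ := main (Real.exp (-(ε / 4))) (Real.exp_pos _)
      (by rw [Real.exp_lt_one_iff]; linarith)
    refine ⟨Φ, hc, fun F => ?_⟩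
    obtain ⟨h0, h1, h2⟩ := h F
    rw [Real.log_exp] at h2
    have h1' := (ENNReal.ofReal_le_iff_le_toReal (hfin F)).1 h1
    have h2' := ENNReal.toReal_le_of_le_ofReal (by linarith) h2
    apply hεu
    rw [Real.dist_eq, abs_lt]
    constructor <;> linarith
  have := ENNReal.continuous_ofReal.comp hd
  refine this.congr (fun F => ?_)
  simp [ENNReal.ofReal_toReal (hfin F)]
end

section
/- Let F be a probability measure supported in [0,1], let μ < 1, and let a < 1. Let T_*F denote the pushforward of F under the affine map T(x) = a + (1−a)x, which is supported in [a,1]. Then D̃_inf(T_*F, a+(1−a)μ) = D̃_inf(F, μ). -/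
open MeasureTheory ProbabilityTheory Set Filter
open scoped ENNReal NNReal Classical BoundedContinuousFunction

theorem LL_map_affine (F : Measure ℝ) (μ a ν : ℝ) :
    LL (Measure.map (fun x => a + (1 - a) * x) F) (a + (1 - a) * μ) ν
      = LL F μ ((1 - a) * ν) := by
  have hT : Measurable (fun x : ℝ => a + (1 - a) * x) := by fun_prop
  have key : ∀ x : ℝ, 1 - (a + (1 - a) * x - (a + (1 - a) * μ)) * ν
      = 1 - (x - μ) * ((1 - a) * ν) := fun x => by ring
  have hm : Measurable (fun x : ℝ => Real.log (1 - (x - (a + (1 - a) * μ)) * ν)) := by fun_prop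
  have hs : MeasurableSet {x : ℝ | 1 - (x - (a + (1 - a) * μ)) * ν ≤ 0} :=
    measurableSet_le (by fun_prop) measurable_const
  unfold LL
  rw [integrable_map_measure hm.aestronglyMeasurable hT.aemeasurable,
    integral_map hT.aemeasurable hm.aestronglyMeasurable, Measure.map_apply hT hs]
  simp only [Function.comp_def, preimage_setOf_eq, key]

/-- Scale invariance of `D̃_inf`: for `F` supported in `[0,1]`,
`μ < 1`, `a < 1` and `T(x) = a + (1-a)x`,
`D̃_inf(T_*F, a+(1-a)μ) = D̃_inf(F,μ)`. -/
theorem stmt18 (F : Measure ℝ) [IsProbabilityMeasure F] (hF : F (Set.Icc 0 1) = 1)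
    (μ a : ℝ) (hμ : μ < 1) (ha : a < 1) :
    Dtilde (Measure.map (fun x => a + (1 - a) * x) F) (a + (1 - a) * μ) = Dtilde F μ := by
  have h1 : 0 < 1 - a := by linarith
  have h2 : 0 < 1 - μ := by linarith
  have h3 : 1 - (a + (1 - a) * μ) = (1 - a) * (1 - μ) := by ring
  unfold Dtilde
  simp only [LL_map_affine, h3]
  apply le_antisymm
  · refine iSup₂_le fun ν hν => ?_
    refine le_iSup₂_of_le ((1 - a) * ν) ⟨mul_nonneg h1.le hν.1, ?_⟩ le_rfl
    calc (1 - a) * ν ≤ (1 - a) * ((1 - a) * (1 - μ))⁻¹ :=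
          mul_le_mul_of_nonneg_left hν.2 h1.le
      _ = (1 - μ)⁻¹ := by field_simp
  · refine iSup₂_le fun ν hν => ?_
    refine le_iSup₂_of_le ((1 - a)⁻¹ * ν) ⟨mul_nonneg (inv_pos.2 h1).le hν.1, ?_⟩ ?_
    · rw [mul_inv]
      exact mul_le_mul_of_nonneg_left hν.2 (inv_pos.2 h1).le
    · rw [mul_inv_cancel_left₀ h1.ne']
end
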